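/- Let R be a commutative domain that is not a field. Then the map μ : R → ∏_{0 ≠ r ∈ R} R/rR defined by μ(x) = (x + rR)_{0 ≠ r ∈ R} is a pure monomorphism of R-modules; that is, μ is injective and for every finitely presented R-module G the induced map μ ⊗_R 1_G : R ⊗_R G → (∏_{0 ≠ r ∈ R} R/rR) ⊗_R G is injective. -/

import Mathlib

/-!
Composing `μ ⊗ 1_G` with the projection to `R/rR ⊗ G ≃ G/rG` shows that an element of the kernel
corresponds to some `x ∈ ⋂_{r ≠ 0} rG`, so it suffices that this intersection vanishes. This holds
for every finitely generated `G`. A maximal linearly independent set of elements of `G` spans a free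
submodule `L` with `G/L` torsion, and clearing denominators on the finitely many generators gives
`s ≠ 0` with `sG ⊆ L`. Hence `x ∈ ⋂_r r(sG) ⊆ ⋂_r rL`. Taking coordinates in `L` reduces the claim
to `⋂_r rR = 0`: if `c ≠ 0` were in it and `a` is a nonzero nonunit, then `c ∈ acR`, making `a`
a unit.
-/

universe u

/-- The elements divisible by every nonzero scalar are zero in a domain that is not a field. -/
lemma eq_zero_of_forall_dvd {R : Type*} [CommRing R] [IsDomain R] (hR : ¬IsField R) {c : R}
    (hc : ∀ r : R, r ≠ 0 → r ∣ c) : c = 0 := by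
  by_contra h
  obtain ⟨a, ha0, ha⟩ := Ring.exists_not_isUnit_of_not_isField hR
  obtain ⟨d, hd⟩ := hc (c * a) (mul_ne_zero h ha0)
  refine ha (IsUnit.of_mul_eq_one d (mul_left_cancel₀ h ?_))
  rw [mul_one, ← mul_assoc, ← hd]

/-- If every element has a nonzero multiple in `L`, then a single multiplier works for the whole
of a finitely generated module. -/
lemma exists_uniform_smul_mem {R G : Type*} [CommRing R] [IsDomain R] [AddCommGroup G] [Module R G]
    [Module.Finite R G] (L : Submodule R G) (hL : ∀ x : G, ∃ a : R, a ≠ 0 ∧ a • x ∈ L) :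
    ∃ s : R, s ≠ 0 ∧ ∀ x : G, s • x ∈ L := by
  obtain ⟨S, hS⟩ := (Module.Finite.fg_top : (⊤ : Submodule R G).FG)
  choose a ha haL using hL
  refine ⟨∏ g ∈ S, a g, Finset.prod_ne_zero_iff.2 fun g _ => ha g, fun x => ?_⟩
  have hx : x ∈ Submodule.span R (S : Set G) := hS ▸ Submodule.mem_top
  induction hx using Submodule.span_induction with
  | mem g hg =>
    obtain ⟨b, hb⟩ := Finset.dvd_prod_of_mem a (Finset.mem_coe.1 hg)
    rw [hb, mul_comm, mul_smul]
    exact L.smul_mem _ (haL g)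
  | zero => simp
  | add x y _ _ hx hy => rw [smul_add]; exact L.add_mem hx hy
  | smul c x _ hx => rw [smul_comm]; exact L.smul_mem _ hx

/-- A finitely generated module over a domain that is not a field has no nonzero element divisible
by all nonzero scalars. -/
lemma eq_zero_of_forall_exists_smul {R G : Type*} [CommRing R] [IsDomain R] (hR : ¬IsField R)
    [AddCommGroup G] [Module R G] [Module.Finite R G] {x : G}
    (hx : ∀ r : R, r ≠ 0 → ∃ y : G, x = r • y) : x = 0 := by
  obtain ⟨I, hI, hmax⟩ := exists_maximal_linearIndepOn R (id : G → G)
  let b := Module.Basis.span hI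
  obtain ⟨s, hs, hsL⟩ := exists_uniform_smul_mem
    (Submodule.span R (Set.range fun i : I => id (i : G))) (fun y => by
      by_cases hy : y ∈ I
      · exact ⟨1, one_ne_zero, by
          rw [one_smul]; exact Submodule.subset_span ⟨⟨y, hy⟩, rfl⟩⟩
      · obtain ⟨a, ha, h⟩ := hmax y hy
        exact ⟨a, ha, by simpa using h⟩)
  obtain ⟨z, hz⟩ := hx s hs
  have hxL : x ∈ Submodule.span R (Set.range fun i : I => id (i : G)) := hz ▸ hsL z
  have h0 : (⟨x, hxL⟩ : Submodule.span R (Set.range fun i : I => id (i : G))) = 0 := by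
    apply b.repr.injective
    rw [map_zero]
    ext i
    refine eq_zero_of_forall_dvd hR fun r hr => ?_
    -- Divisibility of `x` by `r * s` in `G` yields divisibility by `r` inside the free module.
    obtain ⟨y, hy⟩ := hx (r * s) (mul_ne_zero hr hs)
    have : (⟨x, hxL⟩ : Submodule.span R (Set.range fun i : I => id (i : G))) =
        r • ⟨s • y, hsL y⟩ := Subtype.ext (by simpa [mul_smul] using hy)
    rw [this, map_smul]
    exact ⟨_, rfl⟩
  exact congrArg Subtype.val h0

theorem mu_pure_embedding (R : Type u) [CommRing R] [IsDomain R] (hR : ¬IsField R) :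
    Function.Injective
      (LinearMap.pi (fun r : {r : R // r ≠ 0} => (Ideal.span {r.1}).mkQ) :
        R →ₗ[R] ∀ r : {r : R // r ≠ 0}, R ⧸ Ideal.span {r.1}) ∧
    ∀ (G : Type u) [AddCommGroup G] [Module R G], Module.FinitePresentation R G →
      Function.Injective
        (LinearMap.rTensor G
          (LinearMap.pi (fun r : {r : R // r ≠ 0} => (Ideal.span {r.1}).mkQ) :
            R →ₗ[R] ∀ r : {r : R // r ≠ 0}, R ⧸ Ideal.span {r.1})) := by
  refine ⟨?_, fun G _ _ hG => ?_⟩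
  · rw [injective_iff_map_eq_zero]
    intro x hx
    refine eq_zero_of_forall_dvd hR fun r hr => ?_
    have h := congrFun hx ⟨r, hr⟩
    exact Ideal.mem_span_singleton.1 ((Submodule.Quotient.mk_eq_zero _).1 h)
  · rw [injective_iff_map_eq_zero]
    intro t ht
    obtain ⟨x, rfl⟩ := (TensorProduct.lid R G).symm.surjective t
    rw [LinearEquiv.map_eq_zero_iff]
    refine eq_zero_of_forall_exists_smul hR fun r hr => ?_
    -- Project to the factor at `r` and identify `R/rR ⊗ G` with `G/rG`.
    have h := congrArg (TensorProduct.quotTensorEquivQuotSMul G (Ideal.span {r}))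
      (congrArg (LinearMap.rTensor G (LinearMap.proj (R := R)
        (φ := fun r : {r : R // r ≠ 0} => R ⧸ Ideal.span {r.1}) ⟨r, hr⟩)) ht)
    simp only [TensorProduct.lid_symm_apply, LinearMap.rTensor_tmul, map_zero] at h
    have h' : (Submodule.Quotient.mk x : G ⧸ (Ideal.span {r} • (⊤ : Submodule R G))) = 0 := by
      rw [← h]
      exact ((TensorProduct.quotTensorEquivQuotSMul_mk_tmul (Ideal.span {r}) 1 x).trans
        (by rw [one_smul])).symm
    rw [Submodule.Quotient.mk_eq_zero, Submodule.ideal_span_singleton_smul,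
      Submodule.mem_smul_pointwise_iff_exists] at h'
    obtain ⟨y, -, hy⟩ := h'
    exact ⟨y, hy.symm⟩
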